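/- arXiv:2006.02874 — 4 statements merged into one kernel-verified Lean document; each statement's English description precedes it below -/
import Mathlib

section
/- Let p be a natural number ending in 1 and suppose p = (10A+9)(10B+9) for some natural numbers A, B ≥ 1. Then there exist a natural number M ≥ 1 and an integer N with |N| < M and gcd(|N|, M) = 1 such that 200·M·(A·B) = (p−81)·(M+N), 180·M·(A+B) = (p−81)·(M−N), and (N:ℝ)/M ≤ 1 − 36/(√p + 9). -/
theorem stmt_0 (p A B : ℕ) (hp : p % 10 = 1) (hA : 1 ≤ A) (hB : 1 ≤ B)
    (hfac : p = (10 * A + 9) * (10 * B + 9)) :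
    ∃ (M : ℕ) (N : ℤ), 1 ≤ M ∧ |N| < (M : ℤ) ∧ Nat.gcd N.natAbs M = 1 ∧
      200 * (M : ℤ) * (A * B) = ((p : ℤ) - 81) * ((M : ℤ) + N) ∧
      180 * (M : ℤ) * (A + B) = ((p : ℤ) - 81) * ((M : ℤ) - N) ∧
      (N : ℝ) / (M : ℝ) ≤ 1 - 36 / (Real.sqrt p + 9) := by
  have hAB : 1 ≤ A * B := Nat.mul_pos hA hB
  have hA' : (1 : ℤ) ≤ A := by exact_mod_cast hA
  have hB' : (1 : ℤ) ≤ B := by exact_mod_cast hB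
  have hAB' : (1 : ℤ) ≤ (A : ℤ) * B := by exact_mod_cast hAB
  obtain ⟨q, hq⟩ : ∃ q : ℚ, q = ((10 * A * B - 9 * (A + B) : ℤ) : ℚ) / ((10 * A * B + 9 * (A + B) : ℤ) : ℚ) := ⟨_, rfl⟩
  have hD : (0 : ℤ) < 10 * A * B + 9 * (A + B) := by nlinarith
  have hM : (0 : ℤ) < q.den := by exact_mod_cast q.den_pos
  have key : q.num * (10 * A * B + 9 * (A + B)) = (10 * A * B - 9 * (A + B)) * q.den := by
    have h1 : (q.num : ℚ) / q.den = q := Rat.num_div_den q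
    rw [hq] at h1
    rw [← hq] at h1
    have hD' : ((10 * A * B + 9 * (A + B) : ℤ) : ℚ) ≠ 0 := by exact_mod_cast hD.ne'
    have hM' : (q.den : ℚ) ≠ 0 := by exact_mod_cast q.den_pos.ne'
    have h2 := h1.trans hq
    rw [div_eq_div_iff hM' hD'] at h2
    exact_mod_cast h2
  have hpz : (p : ℤ) = (10 * A + 9) * (10 * B + 9) := by rw [hfac]; push_cast; ring
  refine ⟨q.den, q.num, q.den_pos, ?_, q.reduced, ?_, ?_, ?_⟩
  · rw [abs_lt]
    constructor
    · by_contra! h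
      nlinarith [mul_le_mul_of_nonneg_right h hD.le, mul_pos hM (by linarith : (0 : ℤ) < (A : ℤ) * B)]
    · by_contra! h
      nlinarith [mul_le_mul_of_nonneg_right h hD.le, mul_pos hM (by linarith : (0 : ℤ) < (A : ℤ) + B)]
  · rw [hpz]; linear_combination (-10) * key
  · rw [hpz]; linear_combination 10 * key
  · have keyR : (q.num : ℝ) * (10 * A * B + 9 * (A + B)) = (10 * A * B - 9 * (A + B)) * q.den := by
      exact_mod_cast key
    have hMR : (0 : ℝ) < q.den := by exact_mod_cast q.den_pos
    have hDR : (0 : ℝ) < 10 * A * B + 9 * (A + B) := by exact_mod_cast hD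
    have hpR : (p : ℝ) = (10 * A + 9) * (10 * B + 9) := by exact_mod_cast hpz
    have e : (q.num : ℝ) / q.den = 1 - 18 * (A + B) / (10 * A * B + 9 * (A + B)) := by
      field_simp
      linear_combination keyR
    have hs0 := Real.sqrt_nonneg (p : ℝ)
    have hss : √(p : ℝ) * √(p : ℝ) = p := Real.mul_self_sqrt (by positivity)
    have hs : √(p : ℝ) ≤ 5 * (A + B) + 9 := by
      rw [Real.sqrt_le_left (by positivity), hpR]
      nlinarith [sq_nonneg ((A : ℝ) - B)]
    rw [e]
    have : 36 / (√(p : ℝ) + 9) ≤ 18 * (A + B) / (10 * A * B + 9 * (A + B)) := by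
      rw [div_le_div_iff₀ (by positivity) hDR]
      nlinarith [mul_le_mul_of_nonneg_right hs (by positivity : 0 ≤ √(p : ℝ) + 9)]
    linarith
end

section
/- Let p = (10A+9)(10B+9) for natural numbers A, B ≥ 1. Then there exist a natural number M and an integer N with |N| < M, where M = (p−81)/10 or M = (p−81)/20, such that the rational numbers λ₂ = 20M²/((N²+M²)(p−81)) and λ₁ = −20NM/((N²+M²)(p−81)) satisfy (λ₂ − 10/(p−81))² + λ₁² = (10/(p−81))², and moreover (1,1) = λ₁·(9(A+B), −10AB) + λ₂·(10AB, 9(A+B)) as vectors in ℚ². -/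
theorem stmt_1 (p A B : ℕ) (hA : 1 ≤ A) (hB : 1 ≤ B)
    (hfac : p = (10 * A + 9) * (10 * B + 9)) :
    ∃ (M : ℕ) (N : ℤ), |N| < (M : ℤ) ∧
      (M = (p - 81) / 10 ∨ M = (p - 81) / 20) ∧
      (let lam2 : ℚ := 20 * (M : ℚ) ^ 2 / (((N : ℚ) ^ 2 + (M : ℚ) ^ 2) * ((p : ℚ) - 81));
       let lam1 : ℚ := -(20 * (N : ℚ) * (M : ℚ)) / (((N : ℚ) ^ 2 + (M : ℚ) ^ 2) * ((p : ℚ) - 81));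
       (lam2 - 10 / ((p : ℚ) - 81)) ^ 2 + lam1 ^ 2 = (10 / ((p : ℚ) - 81)) ^ 2 ∧
       ((1 : ℚ), (1 : ℚ)) =
         lam1 • ((9 * ((A : ℚ) + B), -(10 * (A : ℚ) * B)) : ℚ × ℚ) +
         lam2 • ((10 * (A : ℚ) * B, 9 * ((A : ℚ) + B)) : ℚ × ℚ)) := by
  have hp : p - 81 = 10 * (10 * A * B + 9 * (A + B)) := by
    have : p = 10 * (10 * A * B + 9 * (A + B)) + 81 := by rw [hfac]; ring
    omega
  have hpq : (p : ℚ) - 81 = 10 * (10 * (A : ℚ) * B + 9 * ((A : ℚ) + B)) := by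
    rw [hfac]; push_cast; ring
  have hAB : 0 < A * B := Nat.mul_pos hA hB
  refine ⟨10 * A * B + 9 * (A + B), 10 * (A : ℤ) * B - 9 * ((A : ℤ) + B), ?_, Or.inl ?_, ?_⟩
  · have h : (0 : ℤ) < (A : ℤ) * B := by exact_mod_cast hAB
    push_cast
    rw [abs_lt]
    constructor <;> nlinarith
  · rw [hp]; omega
  · intro lam2 lam1
    have hx : (0 : ℚ) < 10 * (A : ℚ) * B := by
      have h : (0 : ℚ) < (A : ℚ) * B := by exact_mod_cast hAB
      linarith
    have hy : (0 : ℚ) < 9 * ((A : ℚ) + B) := by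
      have h : (0 : ℚ) < (A : ℚ) := by exact_mod_cast hA
      have h' : (0 : ℚ) < (B : ℚ) := by exact_mod_cast hB
      linarith
    have h2 : lam2 = (10 * (A : ℚ) * B + 9 * ((A : ℚ) + B)) /
        ((10 * (A : ℚ) * B) ^ 2 + (9 * ((A : ℚ) + B)) ^ 2) := by
      simp only [lam2, hpq]
      push_cast
      generalize 10 * (A : ℚ) * B = x at *
      generalize 9 * ((A : ℚ) + B) = y at *
      have e : (x - y) ^ 2 + (x + y) ^ 2 = 2 * (x ^ 2 + y ^ 2) := by ring
      rw [e]
      field_simp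
      ring
    have h1 : lam1 = (9 * ((A : ℚ) + B) - 10 * (A : ℚ) * B) /
        ((10 * (A : ℚ) * B) ^ 2 + (9 * ((A : ℚ) + B)) ^ 2) := by
      simp only [lam1, hpq]
      push_cast
      generalize 10 * (A : ℚ) * B = x at *
      generalize 9 * ((A : ℚ) + B) = y at *
      have e : (x - y) ^ 2 + (x + y) ^ 2 = 2 * (x ^ 2 + y ^ 2) := by ring
      rw [e]
      field_simp
      ring
    clear_value lam1 lam2
    rw [h1, h2, hpq]
    clear h1 h2 hpq hp
    generalize 10 * (A : ℚ) * B = x at *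
    generalize 9 * ((A : ℚ) + B) = y at *
    refine ⟨?_, ?_⟩
    · field_simp
      ring
    · ext
      · simp
        field_simp
        ring
      · simp
        field_simp
        ring
end

section
/- Let p be a natural number ending in 1 and suppose p = (10A+1)(10B+1) for some natural numbers A, B ≥ 1. Then there exist a natural number M ≥ 1 and an integer N with |N| < M and gcd(|N|, M) = 1 such that 200·M·(A·B) = (p−1)·(M+N), 20·M·(A+B) = (p−1)·(M−N), and (N:ℝ)/M ≤ 1 − 4/(√p + 1). -/
theorem stmt_3 (p A B : ℕ) (hp : p % 10 = 1) (hA : 1 ≤ A) (hB : 1 ≤ B)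
    (hfac : p = (10 * A + 1) * (10 * B + 1)) :
    ∃ (M : ℕ) (N : ℤ), 1 ≤ M ∧ |N| < (M : ℤ) ∧ Nat.gcd N.natAbs M = 1 ∧
      200 * (M : ℤ) * (A * B) = ((p : ℤ) - 1) * ((M : ℤ) + N) ∧
      20 * (M : ℤ) * (A + B) = ((p : ℤ) - 1) * ((M : ℤ) - N) ∧
      (N : ℝ) / (M : ℝ) ≤ 1 - 4 / (Real.sqrt p + 1) := by
  obtain ⟨X, hX⟩ : ∃ X : ℤ, X = 10 * (A * B) := ⟨_, rfl⟩
  obtain ⟨Y, hY⟩ : ∃ Y : ℤ, Y = A + B := ⟨_, rfl⟩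
  have hA' : (1 : ℤ) ≤ A := by exact_mod_cast hA
  have hB' : (1 : ℤ) ≤ B := by exact_mod_cast hB
  have hXp : 0 < X := by rw [hX]; positivity
  have hYp : 0 < Y := by rw [hY]; positivity
  have hpz : (p : ℤ) - 1 = 10 * (X + Y) := by rw [hfac, hX, hY]; push_cast; ring
  obtain ⟨q, hq⟩ : ∃ q : ℚ, q = ((X - Y : ℤ) : ℚ) / ((X + Y : ℤ) : ℚ) := ⟨_, rfl⟩
  have hM : 0 < (q.den : ℤ) := by exact_mod_cast q.den_pos
  have key : q.num * (X + Y) = (X - Y) * q.den := by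
    have h1 : ((X + Y : ℤ) : ℚ) ≠ 0 := by
      have : X + Y ≠ 0 := by omega
      exact_mod_cast this
    have h2 : (q.den : ℚ) ≠ 0 := by exact_mod_cast q.den_pos.ne'
    have h3 := Rat.num_div_den q
    rw [hq, div_eq_div_iff (by rw [← hq]; exact h2) h1, ← hq] at h3
    exact_mod_cast h3
  refine ⟨q.den, q.num, q.den_pos, ?_, q.reduced, ?_, ?_, ?_⟩
  · rw [abs_lt]
    constructor <;> nlinarith [mul_pos hXp hM, mul_pos hYp hM]
  · rw [hpz]
    linear_combination (-10) * key - 20 * (q.den : ℤ) * hX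
  · rw [hpz]
    linear_combination 10 * key - 20 * (q.den : ℤ) * hY
  · have hMr : (0 : ℝ) < q.den := by exact_mod_cast hM
    have keyr : (q.num : ℝ) * (X + Y) = (X - Y) * q.den := by exact_mod_cast key
    have hXr : (0 : ℝ) < X := by exact_mod_cast hXp
    have hYr : (0 : ℝ) < Y := by exact_mod_cast hYp
    have hpr : (p : ℝ) - 1 = 10 * (X + Y) := by exact_mod_cast hpz
    have hXe : (X : ℝ) = 10 * (A * B) := by exact_mod_cast hX
    have hYe : (Y : ℝ) = A + B := by exact_mod_cast hY
    have hs0 : 0 ≤ Real.sqrt p := Real.sqrt_nonneg _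
    have hsq : Real.sqrt p * Real.sqrt p = p := Real.mul_self_sqrt (by positivity)
    have hs : Real.sqrt p ≤ 5 * Y + 1 := by
      apply Real.sqrt_le_iff.mpr
      constructor
      · positivity
      · have : (p : ℝ) = 1 + 10 * (X + Y) := by linarith
        rw [this, hXe, hYe]
        nlinarith [sq_nonneg ((A : ℝ) - B)]
    have hN : (q.num : ℝ) / q.den = 1 - 2 * Y / (X + Y) := by
      field_simp
      linarith
    rw [hN]
    have : 4 / (Real.sqrt p + 1) ≤ 2 * Y / (X + Y) := by
      rw [div_le_div_iff₀ (by positivity) (by positivity)]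
      nlinarith
    linarith
end

section
/- Let p be a natural number with p ≡ 1 (mod 10) and 9 ∣ p+10, and suppose p = (10A+9)(10B+9) for natural numbers A, B with 10 ≤ A < B. Set D = (p−71)/90 (a natural number). Then there exists a natural number λ such that D − B − A + 1 = 10λ, 1 + A·B = 9λ, and D + 1 − 101²·p/10⁶ ≤ λ ≤ (D+1)/10 + (9 − √p)/50 (as real numbers). -/
theorem stmt_6 (p A B : ℕ) (hp10 : p % 10 = 1) (hp9 : 9 ∣ p + 10)
    (hA : 10 ≤ A) (hAB : A < B)
    (hfac : p = (10 * A + 9) * (10 * B + 9)) :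
    ∃ lam : ℕ,
      (((p - 71) / 90 : ℕ) : ℤ) - B - A + 1 = 10 * lam ∧
      1 + A * B = 9 * lam ∧
      ((((p - 71) / 90 : ℕ) : ℝ) + 1 - 101 ^ 2 * p / 10 ^ 6 ≤ (lam : ℝ) ∧
       (lam : ℝ) ≤ ((((p - 71) / 90 : ℕ) : ℝ) + 1) / 10 + (9 - Real.sqrt p) / 50) := by
  have hexp : p = 100 * (A * B) + 90 * A + 90 * B + 81 := by rw [hfac]; ring
  obtain ⟨lam, hlam⟩ : 9 ∣ 1 + A * B := by omega
  have hD : (p - 71) / 90 + 1 = 10 * lam + A + B := by omega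
  have hDR : (((p - 71) / 90 : ℕ) : ℝ) + 1 = 10 * lam + A + B := by exact_mod_cast hD
  have hlR : 1 + (A : ℝ) * B = 9 * lam := by exact_mod_cast hlam
  have hpR : (p : ℝ) = (10 * A + 9) * (10 * B + 9) := by exact_mod_cast hfac
  have hAR : (10 : ℝ) ≤ A := by exact_mod_cast hA
  have hBR : (10 : ℝ) ≤ B := by exact_mod_cast (hA.trans hAB.le)
  refine ⟨lam, by omega, hlam, ?_, ?_⟩
  · rw [hDR, hpR]
    have h : ((A : ℝ) + 1) * (B + 1) ≤
        (101 / 1000 * (10 * A + 9)) * (101 / 1000 * (10 * B + 9)) := by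
      apply mul_le_mul <;> linarith
    linarith
  · rw [hDR]
    have h : Real.sqrt p ≤ 5 * (A + B) + 9 := by
      apply Real.sqrt_le_iff.mpr
      refine ⟨by positivity, ?_⟩
      rw [hpR]
      nlinarith [sq_nonneg ((A : ℝ) - B)]
    linarith
end
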